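/- Fix β > 0 and an angle θ_e ∈ ℝ, and for r ≥ 0 let F_β(x,r) = F_β(x) − r·Σ_{i=0}^{2} x_i cos(θ_e − 2πi/3) be the potential with external field of magnitude r and angle θ_e. Suppose a ∈ (0,1/2) is such that (a,a) is a critical point of F_β(·,0), and suppose m : [0,ε) → Ξ° is a curve differentiable at 0 with m(0) = (a,a). Then the map r ↦ F_β(m(r),r) is differentiable at r = 0 with derivative (3a−1)·cos(θ_e). -/

import Mathlib

/-!
At `r = 0` the total derivative of `r ↦ F_β(m(r), r)` splits by the chain rule into
`DF_β(a,a) · m'(0)`, which vanishes because `(a,a)` is a critical point, and the partial derivative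
in `r`, namely `-Σᵢ xᵢ cos(θ - 2πi/3)` at `(a,a)`. Since the two angles `θ - 2π/3` and `θ - 4π/3`
contribute cosines summing to `-cos θ`, the latter equals `(3a - 1) cos θ`.

The chain rule needs `F_β` to be differentiable at `(a,a)`
(`differentiableAt_potF`), which the vanishing of the junk-valued `fderiv` alone does not provide.
-/

/-- The spin value `v_k = (cos(2πk/3), sin(2πk/3))`. -/
noncomputable def potV (k : ℕ) : ℝ × ℝ :=
  (Real.cos (2 * Real.pi * k / 3), Real.sin (2 * Real.pi * k / 3))

/-- `ψ(x) = (2x₁+x₂−1)v₁ + (x₁+2x₂−1)v₂`. -/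
noncomputable def potPsi (x : ℝ × ℝ) : ℝ × ℝ :=
  ((2 * x.1 + x.2 - 1) * (potV 1).1 + (x.1 + 2 * x.2 - 1) * (potV 2).1,
   (2 * x.1 + x.2 - 1) * (potV 1).2 + (x.1 + 2 * x.2 - 1) * (potV 2).2)

/-- The entropy `S(x) = Σᵢ xᵢ log(3xᵢ)` with `x₀ = 1 − x₁ − x₂`
(the convention `t log t = 0` at `t = 0` holds since `Real.log 0 = 0`). -/
noncomputable def potS (x : ℝ × ℝ) : ℝ :=
  (1 - x.1 - x.2) * Real.log (3 * (1 - x.1 - x.2))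
    + x.1 * Real.log (3 * x.1) + x.2 * Real.log (3 * x.2)

/-- The mean-field Potts potential `F_β(x) = −(1/2)|ψ(x)|² + (1/β)S(x)`. -/
noncomputable def potF (β : ℝ) (x : ℝ × ℝ) : ℝ :=
  - (1 / 2) * ((potPsi x).1 ^ 2 + (potPsi x).2 ^ 2) + (1 / β) * potS x

/-- The open two-dimensional simplex `Ξ°`. -/
def simplexInt : Set (ℝ × ℝ) := {x | 0 < x.1 ∧ 0 < x.2 ∧ x.1 + x.2 < 1}

/-- The potential with external field of magnitude `r` and angle `θ`:
`F_β(x,r) = F_β(x) − r Σᵢ xᵢ cos(θ − 2πi/3)`. -/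
noncomputable def potFext (β θ r : ℝ) (x : ℝ × ℝ) : ℝ :=
  potF β x - r * ((1 - x.1 - x.2) * Real.cos θ
    + x.1 * Real.cos (θ - 2 * Real.pi / 3) + x.2 * Real.cos (θ - 4 * Real.pi / 3))

theorem differentiableAt_potF (β : ℝ) {x : ℝ × ℝ} (hx : x ∈ simplexInt) :
    DifferentiableAt ℝ (potF β) x := by
  obtain ⟨h1, h2, h3⟩ := hx
  have e0 : 3 * (1 - x.1 - x.2) ≠ 0 := by
    have : 0 < 1 - x.1 - x.2 := by linarith
    positivity
  have e1 : 3 * x.1 ≠ 0 := by positivity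
  have e2 : 3 * x.2 ≠ 0 := by positivity
  unfold potF potPsi potS
  fun_prop (disch := assumption)

theorem cos_sub_two_pi_div_three_add (θ : ℝ) :
    Real.cos (θ - 2 * Real.pi / 3) + Real.cos (θ - 4 * Real.pi / 3) = -Real.cos θ := by
  have h1 : θ - 2 * Real.pi / 3 = (θ - Real.pi) + Real.pi / 3 := by ring
  have h2 : θ - 4 * Real.pi / 3 = (θ - Real.pi) - Real.pi / 3 := by ring
  rw [h1, h2, Real.cos_add, Real.cos_sub _ (Real.pi / 3), Real.cos_pi_div_three, Real.cos_sub_pi]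
  ring

/-- if `(a,a)` is a critical point of `F_β(·,0)` and `m : [0,ε) → Ξ°` is a
curve differentiable at `0` with `m(0) = (a,a)`, then `r ↦ F_β(m(r),r)` is differentiable
at `r = 0` with derivative `(3a−1)·cos(θ_e)`. -/
theorem potts_perturbation_derivative (β θ a ε : ℝ) (hβ : 0 < β)
    (ha : a ∈ Set.Ioo (0 : ℝ) (1 / 2))
    (hcrit : fderiv ℝ (potF β) (a, a) = 0)
    (m : ℝ → ℝ × ℝ) (hε : 0 < ε) (hmem : ∀ r ∈ Set.Ico (0 : ℝ) ε, m r ∈ simplexInt)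
    (hm0 : m 0 = (a, a)) (hdiff : DifferentiableWithinAt ℝ m (Set.Ici 0) 0) :
    HasDerivWithinAt (fun r => potFext β θ r (m r)) ((3 * a - 1) * Real.cos θ)
      (Set.Ici 0) 0 := by
  have hF : HasFDerivAt (potF β) (0 : ℝ × ℝ →L[ℝ] ℝ) (m 0) := by
    rw [hm0, ← hcrit]
    refine (differentiableAt_potF β ?_).hasFDerivAt
    exact ⟨ha.1, ha.1, by linarith [ha.2]⟩
  have hFm : HasDerivWithinAt (fun r => potF β (m r)) 0 (Set.Ici 0) 0 :=
    hF.comp_hasDerivWithinAt (0 : ℝ) hdiff.hasDerivWithinAt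
  -- The field term is `r * g r`, whose derivative at `0` is `g 0` because the factor `r` vanishes.
  have hg : DifferentiableWithinAt ℝ (fun r => (1 - (m r).1 - (m r).2) * Real.cos θ
      + (m r).1 * Real.cos (θ - 2 * Real.pi / 3)
      + (m r).2 * Real.cos (θ - 4 * Real.pi / 3)) (Set.Ici 0) 0 := by
    fun_prop
  have h := hFm.sub ((hasDerivWithinAt_id (0 : ℝ) (Set.Ici 0)).mul hg.hasDerivWithinAt)
  refine h.congr_deriv ?_
  simp only [hm0, id]
  linear_combination (-a) * cos_sub_two_pi_div_three_add θ
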